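/- Let u and v be smooth plurisubharmonic functions on an open domain U ⊂ ℂ^n such that P_{ω_E}(√-1 ∂∂̄ u) < c and P_{ω_E}(√-1 ∂∂̄ v) < c for some c > 0, where ω_E is the standard Euclidean Kähler form. Then the current T = √-1 ∂∂̄ max(u,v) satisfies n·c·T^{n-1} > (n-1)·T^{n-2} ∧ ω_E in the sense of currents (after local regularization: for any V ⊂⊂ U there is ε > 0 such that for all sufficiently small r, the smooth regularizations T^{(r)} satisfy n(c-ε)(T^{(r)})^{n-1} > (n-1)(T^{(r)})^{n-2} ∧ ω_E on V). -/

import Mathlib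

open Matrix ComplexOrder MeasureTheory Metric

noncomputable instance EuclideanSpace.complexMeasurableSpace (n : ℕ) :
    MeasurableSpace (EuclideanSpace ℂ (Fin n)) := borel _

instance EuclideanSpace.complexBorelSpace (n : ℕ) :
    BorelSpace (EuclideanSpace ℂ (Fin n)) := ⟨rfl⟩

/-- Lebesgue measure on `ℂ^n`. -/
noncomputable def leb (n : ℕ) : Measure (EuclideanSpace ℂ (Fin n)) := Measure.addHaar

/-- Plurisubharmonicity: upper semicontinuity together with the sub-mean value
inequality on every complex disc contained in `U`. -/
def PSHOn {n : ℕ} (f : EuclideanSpace ℂ (Fin n) → ℝ)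
    (U : Set (EuclideanSpace ℂ (Fin n))) : Prop :=
  UpperSemicontinuousOn f U ∧
    ∀ p ∈ U, ∀ v : EuclideanSpace ℂ (Fin n),
      (∀ w : ℂ, ‖w‖ ≤ 1 → p + w • v ∈ U) →
      f p ≤ (2 * Real.pi)⁻¹ * ∫ θ in (0:ℝ)..(2 * Real.pi),
        f (p + Complex.exp (θ * Complex.I) • v)

/-- The complex Hessian matrix `(∂²f/∂z_j ∂z̄_k)` of a real-valued function on `ℂ^n`,
representing the `(1,1)`-form `√-1 ∂∂̄ f`. -/
noncomputable def cHess {n : ℕ} (f : EuclideanSpace ℂ (Fin n) → ℝ)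
    (z : EuclideanSpace ℂ (Fin n)) : Matrix (Fin n) (Fin n) ℂ :=
  Matrix.of fun j k =>
    (((fderiv ℝ (fun w => fderiv ℝ f w (EuclideanSpace.single k 1)) z)
          (EuclideanSpace.single j 1) +
        (fderiv ℝ (fun w => fderiv ℝ f w (Complex.I • EuclideanSpace.single k 1)) z)
          (Complex.I • EuclideanSpace.single j 1) : ℝ) / 4 : ℂ) +
      Complex.I *
        (((fderiv ℝ (fun w => fderiv ℝ f w (Complex.I • EuclideanSpace.single k 1)) z)
            (EuclideanSpace.single j 1) -
          (fderiv ℝ (fun w => fderiv ℝ f w (EuclideanSpace.single k 1)) z)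
            (Complex.I • EuclideanSpace.single j 1) : ℝ) / 4)

/-- `tr_{A|_V}(B|_V)` for the subspace `V` spanned by the columns of `P`. -/
noncomputable def restTrace {N k : ℕ} (A B : Matrix (Fin N) (Fin N) ℂ)
    (P : Matrix (Fin N) (Fin k) ℂ) : ℝ :=
  ((Pᴴ * A * P)⁻¹ * (Pᴴ * B * P)).trace.re

/-- `jP A B = P_B(A)`: supremum over hyperplanes `V` of `tr_{A|_V}(B|_V)`;
`jP A 1 < c` expresses the positivity `n c A^{n-1} - (n-1) A^{n-2} ∧ ω_E > 0`. -/
noncomputable def jP {N : ℕ} (A B : Matrix (Fin N) (Fin N) ℂ) : ℝ :=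
  sSup {x : ℝ | ∃ P : Matrix (Fin N) (Fin (N - 1)) ℂ,
    Function.Injective P.mulVecLin ∧ x = restTrace A B P}

/-- Local regularization at scale `r` of `f` by convolution with the radial mollifier `ρ`. -/
noncomputable def reg {n : ℕ} (f : EuclideanSpace ℂ (Fin n) → ℝ) (ρ : ℝ → ℝ) (r : ℝ)
    (z : EuclideanSpace ℂ (Fin n)) : ℝ :=
  ∫ y in ball (0 : EuclideanSpace ℂ (Fin n)) r,
    ((r ^ (2 * n))⁻¹ * ρ (‖y‖ / r)) * f (z - y) ∂(leb n)


set_option linter.unusedSectionVars false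

section AbstractPart
open Filter Topology

variable {E : Type*} [NormedAddCommGroup E] [NormedSpace ℝ E] [FiniteDimensional ℝ E]
  [MeasurableSpace E] [BorelSpace E] {μ : Measure E} [μ.IsAddHaarMeasure]
  {G : Type*} [NormedAddCommGroup G] [NormedSpace ℝ G] [FiniteDimensional ℝ G]

/-- Convolution of a Lipschitz function with an integrable function is differentiable. -/
theorem conv_lip_hasFDerivAt {f : E → ℝ} {C : NNReal} (hf : LipschitzWith C f) {M : ℝ}
    (hM : ∀ x, ‖f x‖ ≤ M)
    {F : E → G} (hF : Integrable F μ) (z : E) :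
    HasFDerivAt (fun z => ∫ y, f (z - y) • F y ∂μ)
      (∫ y, (fderiv ℝ f (z - y)).smulRight (F y) ∂μ) z := by
  have hsub : ∀ x : E, Measurable (fun y : E => x - y) := fun x => measurable_const.sub measurable_id
  have hfc := hf.continuous
  have hmeas : ∀ x : E, AEStronglyMeasurable (fun y => f (x - y) • F y) μ := fun x =>
    ((hfc.measurable.comp (hsub x)).aestronglyMeasurable).smul hF.1
  have hlin : Continuous (fun p : (E →L[ℝ] ℝ) × G => p.1.smulRight p.2) := by
    fun_prop
  refine (hasFDerivAt_integral_of_dominated_loc_of_lip (μ := μ) (s := Set.univ)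
    (bound := fun y => C * ‖F y‖) univ_mem
    (Eventually.of_forall hmeas) ?_ ?_ ?_ (hF.norm.const_mul _) ?_).2
  · exact hF.bdd_smul M ((hfc.measurable.comp (hsub z)).aestronglyMeasurable)
      (Eventually.of_forall fun y => hM _)
  · have h1 : AEStronglyMeasurable (fun y => fderiv ℝ f (z - y)) μ :=
      ((measurable_fderiv ℝ f).comp (hsub z)).aestronglyMeasurable
    exact hlin.comp_aestronglyMeasurable (h1.prodMk hF.1)
  · refine Eventually.of_forall fun y => ?_
    refine LipschitzOnWith.of_dist_le_mul fun a _ b _ => ?_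
    have := hf.dist_le_mul (a - y) (b - y)
    rw [dist_sub_right] at this
    rw [dist_eq_norm, ← sub_smul, norm_smul, ← dist_eq_norm]
    have h3 : |(C:ℝ) * ‖F y‖| = C * ‖F y‖ := abs_of_nonneg (by positivity)
    rw [Real.coe_nnabs, h3]
    have h2 := mul_le_mul_of_nonneg_right this (norm_nonneg (F y))
    calc _ ≤ _ := h2
      _ = _ := by ring
  · have h1 : ∀ᵐ x ∂μ, DifferentiableAt ℝ f x := hf.ae_differentiableAt
    have h2 : ∀ᵐ y ∂μ, DifferentiableAt ℝ f (z - y) :=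
      (Measure.measurePreserving_sub_left μ z).quasiMeasurePreserving.ae h1
    filter_upwards [h2] with y hy
    have h3 : HasFDerivAt (fun x => f (x - y)) (fderiv ℝ f (z - y)) z := by
      have := hy.hasFDerivAt.comp z ((hasFDerivAt_id z).sub_const y)
      rw [ContinuousLinearMap.comp_id] at this
      exact this
    exact h3.smul_const (F y)

/-- Convolution of two compactly supported Lipschitz functions is twice differentiable. -/
theorem conv_twice_diff {f k : E → ℝ} {C D : NNReal} (hf : LipschitzWith C f)
    (hk : LipschitzWith D k) (hfs : HasCompactSupport f) (hks : HasCompactSupport k) :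
    Differentiable ℝ (fun z => ∫ y, k y * f (z - y) ∂μ) ∧
    Differentiable ℝ (fderiv ℝ (fun z => ∫ y, k y * f (z - y) ∂μ)) := by
  obtain ⟨Mf, hMf⟩ := hf.continuous.bounded_above_of_compact_support hfs
  obtain ⟨Mk, hMk⟩ := hk.continuous.bounded_above_of_compact_support hks
  have e0 : (fun z => ∫ y, k y * f (z - y) ∂μ) = fun z => ∫ y, f (z - y) • k y ∂μ := by
    funext z; congr 1; funext y; simp [mul_comm]
  have hki : Integrable k μ := hk.continuous.integrable_of_hasCompactSupport hks
  have h1 := fun z => conv_lip_hasFDerivAt (μ := μ) hf hMf hki z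
  have h2 : fderiv ℝ (fun z => ∫ y, k y * f (z - y) ∂μ) =
      fun z => ∫ y, k (z - y) • fderiv ℝ f y ∂μ := by
    funext z
    rw [e0, (h1 z).fderiv, ← integral_sub_left_eq_self _ μ z]
    congr 1; funext y
    ext w
    simp [mul_comm]
  refine ⟨?_, ?_⟩
  · rw [e0]; exact fun z => (h1 z).differentiableAt
  · rw [h2]
    have hfi : Integrable (fderiv ℝ f) μ := by
      have hcs : HasCompactSupport (fderiv ℝ f) := hfs.fderiv ℝ
      refine Measure.integrableOn_of_bounded (s := tsupport (fderiv ℝ f)) (M := C)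
        hcs.isCompact.measure_lt_top.ne (measurable_fderiv ℝ f).aestronglyMeasurable
        (Eventually.of_forall fun x => ?_) |>.integrable_of_forall_notMem_eq_zero ?_
      · exact norm_fderiv_le_of_lipschitz ℝ hf
      · intro x hx; exact image_eq_zero_of_notMem_tsupport hx
    exact fun z => (conv_lip_hasFDerivAt hk hMk hfi z).differentiableAt

theorem line_hasDerivAt {g : E → ℝ} (hg : Differentiable ℝ g) (z a : E) (t : ℝ) :
    HasDerivAt (fun t : ℝ => g (z + t • a)) (fderiv ℝ g (z + t • a) a) t := by
  have h : HasDerivAt (fun t : ℝ => z + t • a) a t := by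
    simpa using ((hasDerivAt_id t).smul_const a).const_add z
  exact (hg _).hasFDerivAt.comp_hasDerivAt t h

theorem line_hasDerivAt2 {g : E → ℝ} (z a : E) (t : ℝ)
    (hg : DifferentiableAt ℝ (fderiv ℝ g) (z + t • a)) :
    HasDerivAt (fun t : ℝ => fderiv ℝ g (z + t • a) a)
      (fderiv ℝ (fderiv ℝ g) (z + t • a) a a) t := by
  have h : HasDerivAt (fun t : ℝ => z + t • a) a t := by
    simpa using ((hasDerivAt_id t).smul_const a).const_add z
  have := hg.hasFDerivAt.comp_hasDerivAt t h
  simpa using this.clm_apply (hasDerivAt_const t a)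

theorem second_diff_tendsto {g : E → ℝ} (hg : Differentiable ℝ g) (z a : E)
    (hg2 : DifferentiableAt ℝ (fderiv ℝ g) z) :
    Tendsto (fun h : ℝ => (g (z + h • a) + g (z - h • a) - 2 * g z) / h ^ 2) (𝓝[>] 0)
      (𝓝 (fderiv ℝ (fderiv ℝ g) z a a)) := by
  have hneg : ∀ t : ℝ, HasDerivAt (fun t : ℝ => g (z - t • a)) (-(fderiv ℝ g (z - t • a) a)) t := by
    intro t
    have := line_hasDerivAt hg z (-a) t
    simpa [sub_eq_add_neg] using this
  refine HasDerivAt.lhopital_zero_nhdsGT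
    (f' := fun t => fderiv ℝ g (z + t • a) a - fderiv ℝ g (z - t • a) a)
    (g' := fun t => 2 * t) ?_ ?_ ?_ ?_ ?_ ?_
  · refine Eventually.of_forall fun t => ?_
    have := ((line_hasDerivAt hg z a t).add (hneg t)).sub_const (2 * g z)
    simpa [sub_eq_add_neg] using this
  · refine Eventually.of_forall fun t => ?_
    simpa using hasDerivAt_pow 2 t
  · filter_upwards [self_mem_nhdsWithin] with t ht
    have : (0:ℝ) < t := ht
    positivity
  · refine tendsto_nhdsWithin_of_tendsto_nhds ?_
    have : Continuous (fun h : ℝ => g (z + h • a) + g (z - h • a) - 2 * g z) := by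
      have := hg.continuous
      fun_prop
    have h0 := this.tendsto 0
    simpa [two_mul] using h0
  · refine tendsto_nhdsWithin_of_tendsto_nhds ?_
    have : Continuous (fun h : ℝ => h ^ 2) := by fun_prop
    simpa using this.tendsto 0
  · have h1 := line_hasDerivAt2 (g := g) z a 0 (by simpa using hg2)
    have h2 := line_hasDerivAt2 (g := g) z (-a) 0 (by simpa using hg2)
    have h3 : HasDerivAt (fun t : ℝ => fderiv ℝ g (z + t • a) a - fderiv ℝ g (z - t • a) a)
        (2 * fderiv ℝ (fderiv ℝ g) z a a) 0 := by
      have := h1.add h2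
      refine (HasDerivAt.congr_of_eventuallyEq this (Eventually.of_forall fun t => ?_)).congr_deriv ?_
      · simp [sub_eq_add_neg]
      · simp [two_mul]
    have h4 := (hasDerivAt_iff_tendsto_slope.1 h3).mono_left
      (nhdsWithin_mono (0:ℝ) (t := {0}ᶜ) (s := Set.Ioi 0) (fun x hx => ne_of_gt hx))
    have h5 := h4.const_mul (1/2)
    refine (h5.congr ?_).trans (by simp)
    intro t
    simp only [slope_def_field]
    simp
    ring

theorem second_diff_lower {u : E → ℝ} (hu : ContDiff ℝ 2 u) (hs : HasCompactSupport u)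
    {τ : ℝ} (hτ : 0 < τ) : ∃ δ > 0, ∀ w x : E, ‖x‖ < δ →
      fderiv ℝ (fderiv ℝ u) w x x - τ * ‖x‖ ^ 2 ≤ u (w + x) + u (w - x) - 2 * u w := by
  have h1 : ContDiff ℝ 1 (fderiv ℝ u) := hu.fderiv_right (by norm_num)
  have hd : Differentiable ℝ u := hu.differentiable (by norm_num)
  have hd1 : Differentiable ℝ (fderiv ℝ u) := h1.differentiable (by norm_num)
  have h2 : Continuous (fderiv ℝ (fderiv ℝ u)) := h1.continuous_fderiv (by norm_num)
  have h3 : UniformContinuous (fderiv ℝ (fderiv ℝ u)) :=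
    ((hs.fderiv ℝ).fderiv ℝ).uniformContinuous_of_continuous h2
  obtain ⟨δ, hδ, H⟩ := (Metric.uniformContinuous_iff (f := fderiv ℝ (fderiv ℝ u))).1 (by exact h3) τ hτ
  refine ⟨δ, hδ, fun w x hx => ?_⟩
  set m := fderiv ℝ (fderiv ℝ u) w x x - τ * ‖x‖ ^ 2 with hm
  have hφ' : ∀ t : ℝ, HasDerivAt (fun t : ℝ => u (w + t • x) - m / 2 * t ^ 2)
      (fderiv ℝ u (w + t • x) x - m * t) t := by
    intro t
    have := (line_hasDerivAt hd w x t).sub ((hasDerivAt_pow 2 t).const_mul (m / 2))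
    refine HasDerivAt.congr_deriv this ?_
    simp; ring
  have hφ'' : ∀ t : ℝ, HasDerivAt (fun t : ℝ => fderiv ℝ u (w + t • x) x - m * t)
      (fderiv ℝ (fderiv ℝ u) (w + t • x) x x - m) t := by
    intro t
    have := (line_hasDerivAt2 (g := u) w x t (hd1 _)).sub ((hasDerivAt_id t).const_mul m)
    exact HasDerivAt.congr_deriv this (by simp)
  have hder : deriv (fun t : ℝ => u (w + t • x) - m / 2 * t ^ 2) =
      fun t => fderiv ℝ u (w + t • x) x - m * t := funext fun t => (hφ' t).deriv
  have hconv : ConvexOn ℝ (Set.Icc (-1:ℝ) 1) (fun t : ℝ => u (w + t • x) - m / 2 * t ^ 2) := by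
    refine convexOn_of_deriv2_nonneg' (convex_Icc _ _)
      (fun t _ => (hφ' t).differentiableAt.differentiableWithinAt)
      (by rw [hder]; exact fun t _ => (hφ'' t).differentiableAt.differentiableWithinAt) ?_
    intro t ht
    simp only [Function.iterate_succ, Function.iterate_zero, Function.comp_apply, id]
    rw [hder, (hφ'' t).deriv, hm]
    have hdist : dist (w + t • x) w < δ := by
      rw [dist_eq_norm, add_sub_cancel_left, norm_smul, Real.norm_eq_abs]
      have : |t| ≤ 1 := abs_le.2 ht
      nlinarith [norm_nonneg x]
    have h4 : ‖fderiv ℝ (fderiv ℝ u) (w + t • x) - fderiv ℝ (fderiv ℝ u) w‖ < τ :=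
      (dist_eq_norm (fderiv ℝ (fderiv ℝ u) (w + t • x)) _).symm.trans_lt (H hdist)
    have h5 : |(fderiv ℝ (fderiv ℝ u) (w + t • x) - fderiv ℝ (fderiv ℝ u) w) x x| ≤
        τ * ‖x‖ * ‖x‖ := by
      rw [← Real.norm_eq_abs]
      refine (ContinuousLinearMap.le_opNorm₂ _ _ _).trans ?_
      gcongr
    have h6 := (abs_le.1 h5).1
    simp only [ContinuousLinearMap.sub_apply] at h6
    nlinarith
  have h7 := hconv.2 (show (-1:ℝ) ∈ Set.Icc (-1:ℝ) 1 by simp)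
    (show (1:ℝ) ∈ Set.Icc (-1:ℝ) 1 by simp) (show (0:ℝ) ≤ 1/2 by norm_num)
    (show (0:ℝ) ≤ 1/2 by norm_num) (by norm_num)
  simp only [smul_eq_mul] at h7
  norm_num at h7
  rw [← sub_eq_add_neg] at h7
  linarith

theorem max_conv_lower {u v k : E → ℝ} (hu : ContDiff ℝ 2 u) (hus : HasCompactSupport u)
    (hv : ContDiff ℝ 2 v) (hvs : HasCompactSupport v) {D : NNReal} (hk : LipschitzWith D k)
    (hks : HasCompactSupport k) (hk0 : ∀ y, 0 ≤ k y) (hk1 : ∫ y, k y ∂μ = 1)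
    {ι : Type*} (s : Finset ι) (a : ι → E) (κ : ℝ) (z : E)
    (hul : ∀ y, k y ≠ 0 → κ ≤ ∑ i ∈ s, fderiv ℝ (fderiv ℝ u) (z - y) (a i) (a i))
    (hvl : ∀ y, k y ≠ 0 → κ ≤ ∑ i ∈ s, fderiv ℝ (fderiv ℝ v) (z - y) (a i) (a i)) :
    κ ≤ ∑ i ∈ s, fderiv ℝ (fderiv ℝ (fun z => ∫ y, k y * max (u (z - y)) (v (z - y)) ∂μ)) z
      (a i) (a i) := by
  obtain ⟨Cu, hCu⟩ := hu.lipschitzWith_of_hasCompactSupport hus (by norm_num)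
  obtain ⟨Cv, hCv⟩ := hv.lipschitzWith_of_hasCompactSupport hvs (by norm_num)
  set f : E → ℝ := fun w => max (u w) (v w) with hf
  have hfl : LipschitzWith (max Cu Cv) f := hCu.max hCv
  have hfs : HasCompactSupport f := by
    refine HasCompactSupport.intro (hus.isCompact.union hvs.isCompact) fun x hx => ?_
    rw [Set.mem_union, not_or] at hx
    simp [hf, image_eq_zero_of_notMem_tsupport hx.1, image_eq_zero_of_notMem_tsupport hx.2]
  set g : E → ℝ := fun z => ∫ y, k y * f (z - y) ∂μ with hg
  obtain ⟨hg1, hg2⟩ := conv_twice_diff (μ := μ) hfl hk hfs hks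
  have hki : Integrable k μ := hk.continuous.integrable_of_hasCompactSupport hks
  have hInteg : ∀ w, Integrable (fun y => k y * f (w - y)) μ := by
    intro w
    refine Continuous.integrable_of_hasCompactSupport ?_ hks.mul_right
    have := hk.continuous
    have := hfl.continuous
    fun_prop
  have hlim : Tendsto (fun h : ℝ => ∑ i ∈ s,
      (g (z + h • a i) + g (z - h • a i) - 2 * g z) / h ^ 2) (𝓝[>] 0)
      (𝓝 (∑ i ∈ s, fderiv ℝ (fderiv ℝ g) z (a i) (a i))) :=
    tendsto_finsetSum s fun i _ => second_diff_tendsto hg1 z (a i) (hg2 z)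
  set A := ∑ i ∈ s, ‖a i‖ ^ 2 with hA
  have hA0 : 0 ≤ A := Finset.sum_nonneg fun i _ => by positivity
  suffices hmain : ∀ τ > 0, κ - τ * A ≤ ∑ i ∈ s, fderiv ℝ (fderiv ℝ g) z (a i) (a i) by
    refine le_of_forall_pos_sub_le fun ε hε => ?_
    have := hmain (ε / (A + 1)) (by positivity)
    have h2 : ε / (A + 1) * A ≤ ε := by
      rw [div_mul_eq_mul_div, div_le_iff₀ (by positivity)]
      nlinarith
    linarith
  intro τ hτ
  obtain ⟨δu, hδu, Hu⟩ := second_diff_lower hu hus hτ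
  obtain ⟨δv, hδv, Hv⟩ := second_diff_lower hv hvs hτ
  have hsmall : ∀ᶠ h : ℝ in 𝓝[>] 0, ∀ i ∈ s, ‖h • a i‖ < min δu δv := by
    rw [eventually_all_finset]
    intro i _
    refine mem_nhdsWithin_of_mem_nhds ?_
    have : Continuous (fun h : ℝ => ‖h • a i‖) := by fun_prop
    refine this.continuousAt.eventually_lt continuousAt_const ?_
    simp [hδu, hδv]
  refine ge_of_tendsto hlim ?_
  filter_upwards [hsmall, self_mem_nhdsWithin] with h hh hpos
  have hpos : 0 < h := hpos
  rw [← Finset.sum_div, le_div_iff₀ (by positivity)]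
  have key : ∀ w, (κ ≤ ∑ i ∈ s, fderiv ℝ (fderiv ℝ u) w (a i) (a i)) →
      (κ ≤ ∑ i ∈ s, fderiv ℝ (fderiv ℝ v) w (a i) (a i)) →
      (κ - τ * A) * h ^ 2 ≤ ∑ i ∈ s, (f (w + h • a i) + f (w - h • a i) - 2 * f w) := by
    intro w h1 h2
    have aux : ∀ (p : E → ℝ), (∀ x, ‖x‖ < min δu δv →
        fderiv ℝ (fderiv ℝ p) w x x - τ * ‖x‖ ^ 2 ≤ p (w + x) + p (w - x) - 2 * p w) →
        (∀ x, p x ≤ f x) → p w = f w →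
        (κ ≤ ∑ i ∈ s, fderiv ℝ (fderiv ℝ p) w (a i) (a i)) →
        (κ - τ * A) * h ^ 2 ≤ ∑ i ∈ s, (f (w + h • a i) + f (w - h • a i) - 2 * f w) := by
      intro p hp hpf hpw hκ
      calc (κ - τ * A) * h ^ 2 ≤ (∑ i ∈ s, fderiv ℝ (fderiv ℝ p) w (a i) (a i) - τ * A) * h ^ 2 := by
            gcongr
        _ = ∑ i ∈ s, (fderiv ℝ (fderiv ℝ p) w (h • a i) (h • a i) - τ * ‖h • a i‖ ^ 2) := by
            rw [hA, Finset.mul_sum, ← Finset.sum_sub_distrib, Finset.sum_mul]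
            refine Finset.sum_congr rfl fun i _ => ?_
            simp [norm_smul, mul_pow]
            ring
        _ ≤ _ := by
            refine Finset.sum_le_sum fun i hi => ?_
            have := hp _ (hh i hi)
            have := hpf (w + h • a i)
            have := hpf (w - h • a i)
            linarith
    rcases le_total (v w) (u w) with hvu | huv
    · exact aux u (fun x hx => Hu w x (hx.trans_le (min_le_left _ _)))
        (fun x => le_max_left _ _) (by simp [hf, hvu]) h1
    · exact aux v (fun x hx => Hv w x (hx.trans_le (min_le_right _ _)))
        (fun x => le_max_right _ _) (by simp [hf, huv]) h2
  have hsum : ∑ i ∈ s, (g (z + h • a i) + g (z - h • a i) - 2 * g z) =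
      ∫ y, k y * ∑ i ∈ s, (f (z - y + h • a i) + f (z - y - h • a i) - 2 * f (z - y)) ∂μ := by
    simp_rw [Finset.mul_sum]
    rw [integral_finsetSum]
    · refine Finset.sum_congr rfl fun i _ => ?_
      simp only [hg]
      have h3 := integral_sub ((hInteg (z + h • a i)).add (hInteg (z - h • a i)))
        ((hInteg z).const_mul 2)
      have h4 := integral_add (hInteg (z + h • a i)) (hInteg (z - h • a i))
      rw [← integral_const_mul, ← h4]
      refine h3.symm.trans ?_
      congr 1; funext y
      simp only [Pi.add_apply]
      rw [show z + h • a i - y = z - y + h • a i by abel,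
        show z - h • a i - y = z - y - h • a i by abel]
      ring
    · intro i _
      have := (((hInteg (z + h • a i)).add (hInteg (z - h • a i))).sub ((hInteg z).const_mul 2))
      refine this.congr (Eventually.of_forall fun y => ?_)
      simp only [Pi.add_apply, Pi.sub_apply]
      rw [show z + h • a i - y = z - y + h • a i by abel,
        show z - h • a i - y = z - y - h • a i by abel]
      ring
  rw [hsum]
  calc (κ - τ * A) * h ^ 2 = ∫ y, k y * ((κ - τ * A) * h ^ 2) ∂μ := by
        rw [integral_mul_const, hk1, one_mul]
    _ ≤ _ := by
        refine integral_mono (hki.mul_const _) ?_ fun y => ?_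
        · refine Continuous.integrable_of_hasCompactSupport ?_ hks.mul_right
          have := hk.continuous
          have := hfl.continuous
          fun_prop
        · by_cases hy : k y = 0
          · simp [hy]
          · exact mul_le_mul_of_nonneg_left (key _ (hul y hy) (hvl y hy)) (hk0 y)

end AbstractPart

section MatrixPart

/-- The real quadratic form of a matrix. -/
noncomputable def qf {N : ℕ} (A : Matrix (Fin N) (Fin N) ℂ) (x : Fin N → ℂ) : ℝ :=
  (star x ⬝ᵥ A *ᵥ x).re

/-- The linearized (dual) form of the bound `jP A 1 ≤ s`. -/
def dualCond {N : ℕ} (A : Matrix (Fin N) (Fin N) ℂ) (s : ℝ) : Prop :=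
  ∀ P : Matrix (Fin N) (Fin (N - 1)) ℂ, Function.Injective P.mulVecLin →
    ∀ X : Matrix (Fin (N - 1)) (Fin N) ℂ,
      2 * (P * X).trace.re - ∑ i, qf A (fun j => (P * X) j i) ≤ s

theorem qf_trace {N : ℕ} (A Y : Matrix (Fin N) (Fin N) ℂ) :
    (Yᴴ * A * Y).trace.re = ∑ i, qf A (fun j => Y j i) := by
  simp only [Matrix.trace, Matrix.diag_apply, Complex.re_sum, qf]
  refine Finset.sum_congr rfl fun i _ => ?_
  rw [Matrix.mul_assoc]
  rfl

theorem restTrace_dual_eq {N : ℕ} {A : Matrix (Fin N) (Fin N) ℂ} (hA : A.PosDef)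
    (P : Matrix (Fin N) (Fin (N - 1)) ℂ) (hP : Function.Injective P.mulVecLin) :
    (∀ X : Matrix (Fin (N - 1)) (Fin N) ℂ,
      2 * (P * X).trace.re - ((P * X)ᴴ * A * (P * X)).trace.re ≤ restTrace A 1 P) ∧
    ∃ X : Matrix (Fin (N - 1)) (Fin N) ℂ,
      restTrace A 1 P = 2 * (P * X).trace.re - ((P * X)ᴴ * A * (P * X)).trace.re := by
  have hH : (Pᴴ * A * P).PosDef := hA.conjTranspose_mul_mul_same hP
  set H := Pᴴ * A * P with hHdef
  have hdet : IsUnit H.det := (Matrix.isUnit_iff_isUnit_det _).1 hH.isUnit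
  have hHi : (H⁻¹)ᴴ = H⁻¹ := hH.isHermitian.inv
  have e1 : restTrace A 1 P = (P * (H⁻¹ * Pᴴ)).trace.re := by
    unfold restTrace
    rw [← hHdef, Matrix.mul_one, ← Matrix.mul_assoc, Matrix.trace_mul_comm]
  have e2 : ∀ X : Matrix (Fin (N - 1)) (Fin N) ℂ,
      (P * X)ᴴ * A * (P * X) = Xᴴ * H * X := by
    intro X
    rw [hHdef, Matrix.conjTranspose_mul]
    simp only [Matrix.mul_assoc]
  constructor
  · intro X
    have hpos : 0 ≤ ((X - H⁻¹ * Pᴴ)ᴴ * H * (X - H⁻¹ * Pᴴ)).trace :=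
      (hH.posSemidef.conjTranspose_mul_mul_same _).trace_nonneg
    have hre := (Complex.le_def.1 hpos).1
    have e3 : (X - H⁻¹ * Pᴴ)ᴴ * H * (X - H⁻¹ * Pᴴ) =
        Xᴴ * H * X - (P * X)ᴴ - P * X + P * (H⁻¹ * Pᴴ) := by
      rw [Matrix.conjTranspose_sub, Matrix.conjTranspose_mul, Matrix.conjTranspose_mul,
        Matrix.conjTranspose_conjTranspose, hHi, Matrix.sub_mul, Matrix.sub_mul, Matrix.mul_sub,
        Matrix.mul_sub]
      have a1 : Xᴴ * H * (H⁻¹ * Pᴴ) = Xᴴ * Pᴴ := by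
        rw [Matrix.mul_assoc, Matrix.mul_nonsing_inv_cancel_left _ _ hdet]
      have a2 : P * H⁻¹ * H = P := Matrix.nonsing_inv_mul_cancel_right _ _ hdet
      rw [a1, a2]
      abel
    rw [e3] at hre
    simp only [Matrix.trace_add, Matrix.trace_sub, Matrix.trace_conjTranspose, Complex.add_re,
      Complex.sub_re, Complex.zero_re, Complex.star_def, Complex.conj_re] at hre
    rw [e1, e2]
    linarith
  · refine ⟨H⁻¹ * Pᴴ, ?_⟩
    rw [e2, e1, Matrix.conjTranspose_mul, hHi, Matrix.conjTranspose_conjTranspose,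
      Matrix.nonsing_inv_mul_cancel_right _ _ hdet]
    ring

theorem jP_le_of_dual {N : ℕ} {A : Matrix (Fin N) (Fin N) ℂ} (hA : A.PosDef) {s : ℝ}
    (hs : 0 ≤ s) (h : dualCond A s) : jP A 1 ≤ s := by
  refine Real.sSup_le ?_ hs
  rintro x ⟨P, hP, rfl⟩
  obtain ⟨X, hX⟩ := (restTrace_dual_eq hA P hP).2
  rw [hX, qf_trace]
  exact h P hP X

theorem dual_bdd {N : ℕ} {A : Matrix (Fin N) (Fin N) ℂ} {l : ℝ} (hl : 0 < l)
    (hA : ∀ x, l * ∑ i, ‖x i‖ ^ 2 ≤ qf A x) (Y : Matrix (Fin N) (Fin N) ℂ) :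
    2 * Y.trace.re - ∑ i, qf A (fun j => Y j i) ≤ N * l⁻¹ := by
  have h1 : ∀ i, 2 * (Y i i).re - qf A (fun j => Y j i) ≤ l⁻¹ := by
    intro i
    have h2 := hA (fun j => Y j i)
    have h3 : ‖Y i i‖ ^ 2 ≤ ∑ j, ‖Y j i‖ ^ 2 :=
      Finset.single_le_sum (f := fun j => ‖Y j i‖ ^ 2) (fun j _ => by positivity) (Finset.mem_univ i)
    have h4 : (Y i i).re ≤ ‖Y i i‖ := Complex.re_le_norm _
    have h5 : l * ‖Y i i‖ ^ 2 ≤ l * ∑ j, ‖Y j i‖ ^ 2 := by gcongr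
    have h6 : 2 * ‖Y i i‖ ≤ l * ‖Y i i‖ ^ 2 + l⁻¹ := by
      have h7 : 0 ≤ l * (‖Y i i‖ - l⁻¹) ^ 2 := by positivity
      have h8 : l * (‖Y i i‖ - l⁻¹) ^ 2 = l * ‖Y i i‖ ^ 2 - 2 * ‖Y i i‖ + l⁻¹ := by
        field_simp
        ring
      linarith
    linarith
  calc 2 * Y.trace.re - ∑ i, qf A (fun j => Y j i)
      = ∑ i, (2 * (Y i i).re - qf A (fun j => Y j i)) := by
        simp [Matrix.trace, Finset.mul_sum]
    _ ≤ ∑ _i : Fin N, l⁻¹ := Finset.sum_le_sum fun i _ => h1 i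
    _ = _ := by simp

theorem posDef_lower {N : ℕ} {A : Matrix (Fin N) (Fin N) ℂ} (hA : A.PosDef) :
    ∃ l > 0, ∀ x, l * ∑ i, ‖x i‖ ^ 2 ≤ qf A x := by
  have hcont : Continuous (fun x : EuclideanSpace ℂ (Fin N) => qf A (x : Fin N → ℂ)) := by
    unfold qf dotProduct Matrix.mulVec dotProduct
    simp only [Pi.star_apply]
    fun_prop
  have hpos : ∀ x : Fin N → ℂ, x ≠ 0 → 0 < qf A x := fun x hx =>
    (Complex.lt_def.1 (hA.dotProduct_mulVec_pos hx)).1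
  obtain ⟨l, hl, h⟩ : ∃ l > 0, ∀ x ∈ sphere (0 : EuclideanSpace ℂ (Fin N)) 1,
      l ≤ qf A (x : Fin N → ℂ) := by
    rcases (sphere (0 : EuclideanSpace ℂ (Fin N)) 1).eq_empty_or_nonempty with he | hne
    · exact ⟨1, one_pos, by simp [he]⟩
    · obtain ⟨x, hx, hmin⟩ := (isCompact_sphere (0 : EuclideanSpace ℂ (Fin N)) 1).exists_isMinOn hne
        hcont.continuousOn
      refine ⟨qf A (x : Fin N → ℂ), hpos _ ?_, fun y hy => hmin hy⟩
      intro h0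
      have : x = 0 := by ext i; exact congrFun h0 i
      rw [this] at hx
      simp at hx
  refine ⟨l, hl, fun x => ?_⟩
  by_cases hx : x = 0
  · subst hx; simp [qf]
  set X : EuclideanSpace ℂ (Fin N) := WithLp.toLp 2 x with hX
  have hX0 : X ≠ 0 := by
    intro h0; apply hx; funext i
    have := congrArg (fun v : EuclideanSpace ℂ (Fin N) => v i) h0
    simpa [hX] using this
  have hn : 0 < ‖X‖ := norm_pos_iff.2 hX0
  have h1 := h (((‖X‖⁻¹ : ℝ) : ℂ) • X) (by
    rw [mem_sphere_zero_iff_norm, norm_smul]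
    simp [hn.ne'])
  have h2 : qf A ((((‖X‖⁻¹ : ℝ) : ℂ) • X : EuclideanSpace ℂ (Fin N)) : Fin N → ℂ) =
      (‖X‖⁻¹) ^ 2 * qf A x := by
    have : ((((‖X‖⁻¹ : ℝ) : ℂ) • X : EuclideanSpace ℂ (Fin N)) : Fin N → ℂ) =
      ((‖X‖⁻¹ : ℝ) : ℂ) • x := rfl
    rw [this, qf, qf, Matrix.mulVec_smul, star_smul, smul_dotProduct, dotProduct_smul,
      smul_smul, Complex.star_def, Complex.conj_ofReal, ← Complex.ofReal_mul, smul_eq_mul,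
      Complex.re_ofReal_mul, sq]
  rw [h2] at h1
  have h3 : ‖X‖ ^ 2 = ∑ i, ‖x i‖ ^ 2 := EuclideanSpace.norm_sq_eq X
  rw [← h3]
  calc l * ‖X‖ ^ 2 ≤ ((‖X‖⁻¹) ^ 2 * qf A x) * ‖X‖ ^ 2 := by gcongr
    _ = qf A x := by field_simp

theorem dual_of_jP {N : ℕ} {A : Matrix (Fin N) (Fin N) ℂ} (hA : A.PosDef) :
    dualCond A (jP A 1) := by
  intro P hP X
  obtain ⟨l, hl, h⟩ := posDef_lower hA
  rw [← qf_trace]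
  refine ((restTrace_dual_eq hA P hP).1 X).trans ?_
  refine le_csSup ⟨N * l⁻¹, ?_⟩ ⟨P, hP, rfl⟩
  rintro x ⟨P, hP, rfl⟩
  obtain ⟨X, hX⟩ := (restTrace_dual_eq hA P hP).2
  rw [hX, qf_trace]
  exact dual_bdd hl h _

theorem qf_perturb {N : ℕ} {A B : Matrix (Fin N) (Fin N) ℂ} {η : ℝ}
    (h : ∀ i j, ‖A i j - B i j‖ ≤ η) (x : Fin N → ℂ) :
    qf B x - η * N * ∑ i, ‖x i‖ ^ 2 ≤ qf A x := by
  have e : qf B x - qf A x = (∑ i, ∑ j, star (x i) * (B i j - A i j) * x j).re := by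
    unfold qf dotProduct Matrix.mulVec dotProduct
    rw [← Complex.sub_re, ← Finset.sum_sub_distrib]
    congr 1
    refine Finset.sum_congr rfl fun i _ => ?_
    rw [← mul_sub, ← Finset.sum_sub_distrib, Finset.mul_sum]
    refine Finset.sum_congr rfl fun j _ => ?_
    simp only [Pi.star_apply]
    ring
  have h1 : qf B x - qf A x ≤ ∑ i, ∑ j, η * ((‖x i‖ ^ 2 + ‖x j‖ ^ 2) / 2) := by
    rw [e]
    refine (Complex.re_le_norm _).trans ((norm_sum_le _ _).trans (Finset.sum_le_sum fun i _ => ?_))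
    refine (norm_sum_le _ _).trans (Finset.sum_le_sum fun j _ => ?_)
    rw [norm_mul, norm_mul, norm_star, norm_sub_rev]
    have := h i j
    have h0 := norm_nonneg (A i j - B i j)
    calc ‖x i‖ * ‖A i j - B i j‖ * ‖x j‖ = ‖A i j - B i j‖ * (‖x i‖ * ‖x j‖) := by ring
      _ ≤ η * ((‖x i‖ ^ 2 + ‖x j‖ ^ 2) / 2) := by
        refine mul_le_mul this ?_ (by positivity) (h0.trans this)
        nlinarith [sq_nonneg (‖x i‖ - ‖x j‖)]
  have h2 : ∑ i, ∑ j, η * ((‖x i‖ ^ 2 + ‖x j‖ ^ 2) / 2) = η * N * ∑ i, ‖x i‖ ^ 2 := by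
    simp only [← Finset.mul_sum, ← Finset.sum_div, Finset.sum_add_distrib, Finset.sum_const,
      Finset.card_univ, Fintype.card_fin, nsmul_eq_mul]
    ring
  linarith

theorem local_uniform {N : ℕ} {A₀ : Matrix (Fin N) (Fin N) ℂ} (hA : A₀.PosDef) {c : ℝ}
    (hc : 0 < c) (hj : jP A₀ 1 < c) :
    ∃ η > 0, ∃ δ > 0, ∃ s, 0 < s ∧ s < c ∧ ∀ A : Matrix (Fin N) (Fin N) ℂ,
      (∀ i j, ‖A i j - A₀ i j‖ ≤ η) → (∀ x, δ * ∑ i, ‖x i‖ ^ 2 ≤ qf A x) ∧ dualCond A s := by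
  obtain ⟨l, hl, h⟩ := posDef_lower hA
  set j := max (jP A₀ 1) (c / 2) with hjd
  have hj0 : 0 < j := lt_max_of_lt_right (by linarith)
  have hjc : j < c := max_lt hj (by linarith)
  set s := (j + c) / 2 with hs
  have hs0 : 0 < s := by positivity
  have hjs : j < s := by rw [hs]; linarith
  set θ := j / s with hθ
  have hθ0 : 0 < θ := by positivity
  have hθ1 : θ < 1 := (div_lt_one hs0).2 hjs
  refine ⟨(1 - θ) * l / (N + 1), by have : 0 < 1 - θ := by linarith
                                    positivity, θ * l, by positivity, s, hs0, by rw [hs]; linarith, ?_⟩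
  intro A hAA
  have key : ∀ x, θ * qf A₀ x ≤ qf A x := by
    intro x
    have h1 := qf_perturb hAA x
    have h2 := h x
    set S := ∑ i, ‖x i‖ ^ 2 with hS
    have hS0 : 0 ≤ S := Finset.sum_nonneg fun i _ => by positivity
    have h3 : (1 - θ) * l / (N + 1) * N * S ≤ (1 - θ) * (l * S) := by
      have : (N : ℝ) / (N + 1) ≤ 1 := (div_le_one (by positivity)).2 (by linarith)
      calc (1 - θ) * l / (N + 1) * N * S = (N / (N + 1) : ℝ) * ((1 - θ) * (l * S)) := by ring
        _ ≤ 1 * ((1 - θ) * (l * S)) := by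
          have : 0 ≤ 1 - θ := by linarith
          gcongr
        _ = _ := one_mul _
    nlinarith
  refine ⟨fun x => ?_, ?_⟩
  · have := h x
    calc _ = θ * (l * ∑ i, ‖x i‖ ^ 2) := by ring
      _ ≤ θ * qf A₀ x := by gcongr
      _ ≤ _ := key x
  · intro P hP X
    have h1 := dual_of_jP hA P hP ((θ : ℂ) • X)
    have h2 : ∀ i, qf A₀ (fun k => (P * ((θ : ℂ) • X)) k i) =
        θ ^ 2 * qf A₀ (fun k => (P * X) k i) := by
      intro i
      have : (fun k => (P * ((θ : ℂ) • X)) k i) = (θ : ℂ) • (fun k => (P * X) k i) := by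
        funext k; simp
      rw [this, qf, qf, Matrix.mulVec_smul, star_smul, smul_dotProduct, dotProduct_smul,
        smul_smul, Complex.star_def, Complex.conj_ofReal, ← Complex.ofReal_mul, smul_eq_mul,
        Complex.re_ofReal_mul, sq]
    simp_rw [h2] at h1
    rw [Matrix.mul_smul, Matrix.trace_smul, smul_eq_mul, Complex.re_ofReal_mul,
      ← Finset.mul_sum] at h1
    have h3 : θ * ∑ i, qf A₀ (fun k => (P * X) k i) ≤ ∑ i, qf A (fun k => (P * X) k i) := by
      rw [Finset.mul_sum]
      exact Finset.sum_le_sum fun i _ => key _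
    have h4 : jP A₀ 1 ≤ j := le_max_left _ _
    have h5 : j = θ * s := by rw [hθ]; field_simp
    have h6 : θ * (2 * (P * X).trace.re - θ * ∑ i, qf A₀ (fun k => (P * X) k i)) ≤ θ * s := by
      linarith
    have h7 := le_of_mul_le_mul_left h6 hθ0
    linarith

theorem posDef_of_lower {N : ℕ} {A : Matrix (Fin N) (Fin N) ℂ} (hA : A.IsHermitian) {δ : ℝ}
    (hδ : 0 < δ) (h : ∀ x, δ * ∑ i, ‖x i‖ ^ 2 ≤ qf A x) : A.PosDef := by
  refine Matrix.PosDef.of_dotProduct_mulVec_pos hA fun x hx => ?_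
  rw [Complex.lt_def]
  constructor
  · refine lt_of_lt_of_le ?_ (h x)
    obtain ⟨i, hi⟩ := Function.ne_iff.1 hx
    refine mul_pos hδ (Finset.sum_pos' (fun i _ => by positivity) ⟨i, Finset.mem_univ i, ?_⟩)
    have : 0 < ‖x i‖ := norm_pos_iff.2 hi
    positivity
  · exact (hA.im_star_dotProduct_mulVec_self x).symm

end MatrixPart

section HessPart
open Filter Topology

/-- the vector attached to `x` in the Levi form -/
noncomputable def cvec {n : ℕ} (x : Fin n → ℂ) : EuclideanSpace ℂ (Fin n) :=
  WithLp.toLp 2 (star x)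

theorem cvec_eq {n : ℕ} (x : Fin n → ℂ) :
    cvec x = ∑ k, ((x k).re • EuclideanSpace.single k (1:ℂ) -
      (x k).im • (Complex.I • EuclideanSpace.single k (1:ℂ))) := by
  ext i
  rw [WithLp.ofLp_sum, Finset.sum_apply, Finset.sum_eq_single i]
  · apply Complex.ext <;> simp [cvec]
  · intro k _ hk; simp [hk.symm]
  · simp

theorem I_cvec_eq {n : ℕ} (x : Fin n → ℂ) :
    Complex.I • cvec x = ∑ k, ((x k).re • (Complex.I • EuclideanSpace.single k (1:ℂ)) +
      (x k).im • (EuclideanSpace.single k (1:ℂ))) := by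
  ext i
  rw [WithLp.ofLp_sum, Finset.sum_apply, Finset.sum_eq_single i]
  · apply Complex.ext <;> simp [cvec]
  · intro k _ hk; simp [hk.symm]
  · simp

theorem fderiv_dir {n : ℕ} {f : EuclideanSpace ℂ (Fin n) → ℝ} {z : EuclideanSpace ℂ (Fin n)}
    (hf : DifferentiableAt ℝ (fderiv ℝ f) z) (a b : EuclideanSpace ℂ (Fin n)) :
    fderiv ℝ (fun w => fderiv ℝ f w b) z a = fderiv ℝ (fderiv ℝ f) z a b := by
  have := hf.hasFDerivAt.clm_apply (hasFDerivAt_const b z)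
  rw [this.fderiv]
  simp

theorem cHess_apply {n : ℕ} {f : EuclideanSpace ℂ (Fin n) → ℝ} {z : EuclideanSpace ℂ (Fin n)}
    (hf : DifferentiableAt ℝ (fderiv ℝ f) z) (j k : Fin n) :
    cHess f z j k = (⟨(fderiv ℝ (fderiv ℝ f) z (EuclideanSpace.single j 1) (EuclideanSpace.single k 1)
      + fderiv ℝ (fderiv ℝ f) z (Complex.I • EuclideanSpace.single j 1)
        (Complex.I • EuclideanSpace.single k 1)) / 4,
      (fderiv ℝ (fderiv ℝ f) z (EuclideanSpace.single j 1) (Complex.I • EuclideanSpace.single k 1)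
      - fderiv ℝ (fderiv ℝ f) z (Complex.I • EuclideanSpace.single j 1)
        (EuclideanSpace.single k 1)) / 4⟩ : ℂ) := by
  simp only [cHess, Matrix.of_apply, fderiv_dir hf]
  generalize fderiv ℝ (fderiv ℝ f) z = B
  rw [Complex.mk_eq_add_mul_I]
  push_cast
  ring

theorem cHess_herm {n : ℕ} {f : EuclideanSpace ℂ (Fin n) → ℝ} {z : EuclideanSpace ℂ (Fin n)}
    (hd : Differentiable ℝ f) (hf : DifferentiableAt ℝ (fderiv ℝ f) z) :
    (cHess f z).IsHermitian := by
  have hsym := second_derivative_symmetric (fun y => (hd y).hasFDerivAt) hf.hasFDerivAt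
  ext j k
  rw [Matrix.conjTranspose_apply, cHess_apply hf, cHess_apply hf]
  apply Complex.ext
  · simp only [Complex.star_def, Complex.conj_re]
    rw [hsym (EuclideanSpace.single k 1) (EuclideanSpace.single j 1),
      hsym (Complex.I • EuclideanSpace.single k 1) (Complex.I • EuclideanSpace.single j 1)]
  · simp only [Complex.star_def, Complex.conj_im]
    rw [hsym (EuclideanSpace.single k 1) (Complex.I • EuclideanSpace.single j 1),
      hsym (Complex.I • EuclideanSpace.single k 1) (EuclideanSpace.single j 1)]
    ring

theorem cHess_qf {n : ℕ} {f : EuclideanSpace ℂ (Fin n) → ℝ} {z : EuclideanSpace ℂ (Fin n)}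
    (hf : DifferentiableAt ℝ (fderiv ℝ f) z) (x : Fin n → ℂ) :
    4 * qf (cHess f z) x = fderiv ℝ (fderiv ℝ f) z (cvec x) (cvec x) +
      fderiv ℝ (fderiv ℝ f) z (Complex.I • cvec x) (Complex.I • cvec x) := by
  rw [I_cvec_eq, cvec_eq]
  unfold qf dotProduct Matrix.mulVec dotProduct
  simp only [cHess_apply hf]
  generalize fderiv ℝ (fderiv ℝ f) z = B
  simp only [map_sum, map_add, map_sub, map_smul, _root_.sum_apply, _root_.add_apply,
    _root_.sub_apply, _root_.smul_apply, Pi.star_apply, Complex.re_sum, Finset.mul_sum]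
  rw [Finset.sum_comm, ← Finset.sum_add_distrib]
  refine Finset.sum_congr rfl fun k _ => ?_
  simp only [smul_eq_mul, Finset.mul_sum, ← Finset.sum_sub_distrib, ← Finset.sum_add_distrib]
  refine Finset.sum_congr rfl fun j _ => ?_
  simp only [Complex.mul_re, Complex.mul_im, Complex.star_def, Complex.conj_re, Complex.conj_im]
  ring

theorem cHess_congr {n : ℕ} {f g : EuclideanSpace ℂ (Fin n) → ℝ} {z : EuclideanSpace ℂ (Fin n)}
    (h : f =ᶠ[𝓝 z] g) : cHess f z = cHess g z := by
  have h1 : ∀ b : EuclideanSpace ℂ (Fin n), fderiv ℝ (fun w => fderiv ℝ f w b) z = fderiv ℝ (fun w => fderiv ℝ g w b) z := by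
    intro b
    refine Filter.EventuallyEq.fderiv_eq ?_
    filter_upwards [h.fderiv (𝕜 := ℝ)] with w hw
    rw [hw]
  unfold cHess
  simp only [h1]

theorem cHess_continuous {n : ℕ} {f : EuclideanSpace ℂ (Fin n) → ℝ} (hf : ContDiff ℝ 2 f)
    (j k : Fin n) : Continuous (fun z => cHess f z j k) := by
  have h1 : ContDiff ℝ 1 (fderiv ℝ f) := hf.fderiv_right (by norm_num)
  have hd1 : Differentiable ℝ (fderiv ℝ f) := h1.differentiable (by norm_num)
  have h2 : Continuous (fderiv ℝ (fderiv ℝ f)) := h1.continuous_fderiv (by norm_num)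
  have h3 : ∀ a b : EuclideanSpace ℂ (Fin n), Continuous (fun z => fderiv ℝ (fun w => fderiv ℝ f w b) z a) := by
    intro a b
    simp only [fun z => fderiv_dir (hd1 z) a b]
    exact (h2.clm_apply continuous_const).clm_apply continuous_const
  unfold cHess
  simp only [Matrix.of_apply]
  have c1 := h3 (EuclideanSpace.single j 1) (EuclideanSpace.single k 1)
  have c2 := h3 (Complex.I • EuclideanSpace.single j 1) (EuclideanSpace.single k 1)
  have c3 := h3 (EuclideanSpace.single j 1) (Complex.I • EuclideanSpace.single k 1)
  have c4 := h3 (Complex.I • EuclideanSpace.single j 1) (Complex.I • EuclideanSpace.single k 1)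
  refine Continuous.add ?_ (continuous_const.mul ?_)
  · exact (Complex.continuous_ofReal.comp (c1.add c4)).div_const _
  · exact (Complex.continuous_ofReal.comp (c3.sub c2)).div_const _

theorem uniform_on_compact {n : ℕ} {f : EuclideanSpace ℂ (Fin n) → ℝ} (hf : ContDiff ℝ 2 f)
    {L : Set (EuclideanSpace ℂ (Fin n))} (hL : IsCompact L) {c : ℝ} (hc : 0 < c)
    (h : ∀ z ∈ L, (cHess f z).PosDef ∧ jP (cHess f z) 1 < c) :
    ∃ δ > 0, ∃ s, 0 < s ∧ s < c ∧ ∀ z ∈ L,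
      (∀ x, δ * ∑ i, ‖x i‖ ^ 2 ≤ qf (cHess f z) x) ∧ dualCond (cHess f z) s := by
  refine hL.induction_on (p := fun S => ∃ δ > 0, ∃ s, 0 < s ∧ s < c ∧ ∀ z ∈ S,
      (∀ x, δ * ∑ i, ‖x i‖ ^ 2 ≤ qf (cHess f z) x) ∧ dualCond (cHess f z) s) ?_ ?_ ?_ ?_
  · exact ⟨1, one_pos, c / 2, by linarith, by linarith, by simp⟩
  · rintro S T hST ⟨δ, hδ, s, hs, hsc, H⟩
    exact ⟨δ, hδ, s, hs, hsc, fun z hz => H z (hST hz)⟩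
  · rintro S T ⟨δ, hδ, s, hs, hsc, H⟩ ⟨δ', hδ', s', hs', hsc', H'⟩
    refine ⟨min δ δ', lt_min hδ hδ', max s s', lt_max_of_lt_left hs, max_lt hsc hsc', ?_⟩
    have hx0 : ∀ x : Fin n → ℂ, 0 ≤ ∑ i, ‖x i‖ ^ 2 := fun x =>
      Finset.sum_nonneg fun i _ => by positivity
    rintro z (hz | hz)
    · refine ⟨fun x => ?_, fun P hP X => ((H z hz).2 P hP X).trans (le_max_left _ _)⟩
      exact (mul_le_mul_of_nonneg_right (min_le_left _ _) (hx0 x)).trans ((H z hz).1 x)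
    · refine ⟨fun x => ?_, fun P hP X => ((H' z hz).2 P hP X).trans (le_max_right _ _)⟩
      exact (mul_le_mul_of_nonneg_right (min_le_right _ _) (hx0 x)).trans ((H' z hz).1 x)
  · intro z hz
    obtain ⟨η, hη, δ, hδ, s, hs, hsc, H⟩ := local_uniform (h z hz).1 hc (h z hz).2
    have hev : ∀ᶠ w in 𝓝 z, ∀ i j, ‖cHess f w i j - cHess f z i j‖ ≤ η := by
      refine eventually_all.2 fun i => eventually_all.2 fun j => ?_
      have hc' : Continuous (fun w => ‖cHess f w i j - cHess f z i j‖) :=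
        ((cHess_continuous hf i j).sub continuous_const).norm
      have := hc'.continuousAt.eventually_lt (continuousAt_const (y := η) (x := z)) (by simpa using hη)
      exact this.mono fun w hw => hw.le
    exact ⟨_, mem_nhdsWithin_of_mem_nhds hev, δ, hδ, s, hs, hsc, fun w hw => H _ hw⟩

end HessPart

section FinalPart
open Filter Topology

theorem leb_haar (n : ℕ) : (leb n).IsAddHaarMeasure := by
  unfold leb; infer_instance

theorem finrank_real_cn (n : ℕ) : Module.finrank ℝ (EuclideanSpace ℂ (Fin n)) = 2 * n := by
  rw [← Module.finrank_mul_finrank ℝ ℂ]; simp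

theorem rho_lipschitz {ρ : ℝ → ℝ} (hρsm : ContDiff ℝ (⊤ : ℕ∞) ρ)
    (hρsupp : ∀ t, 1 < t → ρ t = 0) :
    ∃ C : NNReal, LipschitzOnWith C ρ (Set.Ici 0) := by
  have hd : Continuous (deriv ρ) := hρsm.continuous_deriv (by norm_cast)
  obtain ⟨C, hC⟩ := (isCompact_Icc (a := (0:ℝ)) (b := 1)).exists_bound_of_continuousOn hd.continuousOn
  refine ⟨C.toNNReal, ?_⟩
  refine Convex.lipschitzOnWith_of_nnnorm_deriv_le
    (fun x _ => (hρsm.differentiable (by norm_cast)).differentiableAt)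
    (fun x hx => ?_) (convex_Ici 0)
  have hC0 : 0 ≤ C := (norm_nonneg _).trans (hC 0 (by simp))
  rw [← NNReal.coe_le_coe, coe_nnnorm, Real.coe_toNNReal _ hC0]
  rcases le_or_gt x 1 with h | h
  · exact hC x ⟨hx, h⟩
  · have : ρ =ᶠ[𝓝 x] fun _ => 0 := by
      filter_upwards [lt_mem_nhds h] with t ht
      exact hρsupp t ht
    rw [this.deriv_eq]
    simpa using hC0

theorem rho_one {ρ : ℝ → ℝ} (hρsm : ContDiff ℝ (⊤ : ℕ∞) ρ)
    (hρsupp : ∀ t, 1 < t → ρ t = 0) (t : ℝ) (ht : 1 ≤ t) : ρ t = 0 := by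
  have hcl : IsClosed {t | ρ t = 0} := isClosed_eq hρsm.continuous continuous_const
  have : closure (Set.Ioi (1:ℝ)) ⊆ {t | ρ t = 0} := closure_minimal (fun t ht => hρsupp t ht) hcl
  rw [closure_Ioi] at this
  exact this ht

theorem kernel_lip {n : ℕ} {ρ : ℝ → ℝ} (hρsm : ContDiff ℝ (⊤ : ℕ∞) ρ)
    (hρsupp : ∀ t, 1 < t → ρ t = 0) {r : ℝ} (hr : 0 < r) :
    ∃ D : NNReal, LipschitzWith D
      (fun y : EuclideanSpace ℂ (Fin n) => (r ^ (2 * n))⁻¹ * ρ (‖y‖ / r)) := by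
  obtain ⟨C, hC⟩ := rho_lipschitz hρsm hρsupp
  refine ⟨((r ^ (2 * n))⁻¹ * (C / r)).toNNReal, LipschitzWith.of_dist_le_mul fun x y => ?_⟩
  rw [Real.coe_toNNReal _ (by positivity), Real.dist_eq, ← mul_sub, abs_mul,
    abs_of_pos (by positivity), mul_assoc]
  refine mul_le_mul_of_nonneg_left ?_ (by positivity)
  have h := hC.dist_le_mul (‖x‖ / r) (Set.mem_Ici.2 (by positivity)) (‖y‖ / r)
    (Set.mem_Ici.2 (by positivity))
  rw [Real.dist_eq, Real.dist_eq, ← sub_div, abs_div, abs_of_pos hr] at h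
  refine h.trans ?_
  rw [div_mul_eq_mul_div, mul_div_assoc, dist_eq_norm]
  have := abs_norm_sub_norm_le x y
  gcongr

theorem kernel_zero {n : ℕ} {ρ : ℝ → ℝ} (hρsm : ContDiff ℝ (⊤ : ℕ∞) ρ)
    (hρsupp : ∀ t, 1 < t → ρ t = 0) {r : ℝ} (hr : 0 < r) (y : EuclideanSpace ℂ (Fin n))
    (hy : r ≤ ‖y‖) : (r ^ (2 * n))⁻¹ * ρ (‖y‖ / r) = 0 := by
  rw [rho_one hρsm hρsupp _ ((one_le_div hr).2 hy), mul_zero]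

theorem kernel_supp {n : ℕ} {ρ : ℝ → ℝ} (hρsm : ContDiff ℝ (⊤ : ℕ∞) ρ)
    (hρsupp : ∀ t, 1 < t → ρ t = 0) {r : ℝ} (hr : 0 < r) :
    HasCompactSupport
      (fun y : EuclideanSpace ℂ (Fin n) => (r ^ (2 * n))⁻¹ * ρ (‖y‖ / r)) := by
  refine HasCompactSupport.intro (isCompact_closedBall 0 r) fun y hy => ?_
  refine kernel_zero hρsm hρsupp hr y ?_
  rw [mem_closedBall_zero_iff, not_le] at hy
  exact hy.le

theorem kernel_int {n : ℕ} {ρ : ℝ → ℝ} (hρsm : ContDiff ℝ (⊤ : ℕ∞) ρ)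
    (hρsupp : ∀ t, 1 < t → ρ t = 0)
    (hρnorm : ∫ y in ball (0 : EuclideanSpace ℂ (Fin n)) 1, ρ ‖y‖ ∂(leb n) = 1)
    {r : ℝ} (hr : 0 < r) :
    ∫ y : EuclideanSpace ℂ (Fin n), (r ^ (2 * n))⁻¹ * ρ (‖y‖ / r) ∂(leb n) = 1 := by
  haveI := leb_haar n
  rw [setIntegral_eq_integral_of_forall_compl_eq_zero] at hρnorm
  · have h := Measure.integral_comp_inv_smul_of_nonneg (leb n)
      (fun y : EuclideanSpace ℂ (Fin n) => ρ ‖y‖) hr.le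
    rw [hρnorm, finrank_real_cn] at h
    have e : ∀ y : EuclideanSpace ℂ (Fin n), ‖r⁻¹ • y‖ = ‖y‖ / r := by
      intro y
      rw [norm_smul, norm_inv, Real.norm_of_nonneg hr.le]; ring
    simp only [e] at h
    rw [integral_const_mul, h]
    have : r ^ (2 * n) ≠ 0 := by positivity
    simp [this]
  · intro y hy
    rw [mem_ball_zero_iff, not_lt] at hy
    exact rho_one hρsm hρsupp _ hy

theorem exists_global {n : ℕ} {U L : Set (EuclideanSpace ℂ (Fin n))} (hU : IsOpen U)
    (hL : IsCompact L) (hLU : L ⊆ U) :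
    ∃ χ : EuclideanSpace ℂ (Fin n) → ℝ, (∀ z ∈ L, ∀ᶠ w in 𝓝 z, χ w = 1) ∧
      ∀ f : EuclideanSpace ℂ (Fin n) → ℝ, ContDiffOn ℝ (⊤ : ℕ∞) f U →
        ContDiff ℝ 2 (fun z => χ z * f z) ∧ HasCompactSupport (fun z => χ z * f z) := by
  obtain ⟨M, hM, hLM, hMU⟩ := exists_compact_between hL hU hLU
  obtain ⟨χ, h1, h0, -⟩ := exists_contMDiffMap_one_nhds_of_subset_interior (n := 2)
    (modelWithCornersSelf ℝ (EuclideanSpace ℂ (Fin n))) hL.isClosed hLM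
  have hχ : ContDiff ℝ 2 (χ : EuclideanSpace ℂ (Fin n) → ℝ) := χ.contMDiff.contDiff
  refine ⟨χ, fun z hz => ?_, fun f hf => ⟨?_, ?_⟩⟩
  · exact (eventually_nhdsSet_iff_forall.1 h1) z hz
  · rw [contDiff_iff_contDiffAt]
    intro x
    by_cases hx : x ∈ U
    · refine hχ.contDiffAt.mul ?_
      refine (hf.contDiffAt (hU.mem_nhds hx)).of_le ?_
      norm_cast
    · have : (fun z => χ z * f z) =ᶠ[𝓝 x] fun _ => 0 := by
        filter_upwards [hM.isClosed.isOpen_compl.mem_nhds (fun h => hx (hMU h))] with z hz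
        rw [h0 z hz, zero_mul]
      exact contDiffAt_const.congr_of_eventuallyEq this
  · refine HasCompactSupport.intro hM fun z hz => ?_
    rw [h0 z hz, zero_mul]

theorem final_point {n : ℕ} {u v k : EuclideanSpace ℂ (Fin n) → ℝ}
    (hu : ContDiff ℝ 2 u) (hus : HasCompactSupport u)
    (hv : ContDiff ℝ 2 v) (hvs : HasCompactSupport v) {D : NNReal} (hk : LipschitzWith D k)
    (hks : HasCompactSupport k) (hk0 : ∀ y, 0 ≤ k y) (hk1 : ∫ y, k y ∂(leb n) = 1)
    {δ s : ℝ} (hδ : 0 < δ) (hs : 0 < s) (z : EuclideanSpace ℂ (Fin n))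
    (Hu : ∀ y, k y ≠ 0 → (∀ x, δ * ∑ i, ‖x i‖ ^ 2 ≤ qf (cHess u (z - y)) x) ∧
      dualCond (cHess u (z - y)) s)
    (Hv : ∀ y, k y ≠ 0 → (∀ x, δ * ∑ i, ‖x i‖ ^ 2 ≤ qf (cHess v (z - y)) x) ∧
      dualCond (cHess v (z - y)) s) :
    (cHess (fun z => ∫ y, k y * max (u (z - y)) (v (z - y)) ∂(leb n)) z).PosDef ∧
    jP (cHess (fun z => ∫ y, k y * max (u (z - y)) (v (z - y)) ∂(leb n)) z) 1 ≤ s := by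
  haveI := leb_haar n
  have hdu : Differentiable ℝ (fderiv ℝ u) :=
    (hu.fderiv_right (m := 1) (by norm_num)).differentiable (by norm_num)
  have hdv : Differentiable ℝ (fderiv ℝ v) :=
    (hv.fderiv_right (m := 1) (by norm_num)).differentiable (by norm_num)
  obtain ⟨Cu, hCu⟩ := hu.lipschitzWith_of_hasCompactSupport hus (by norm_num)
  obtain ⟨Cv, hCv⟩ := hv.lipschitzWith_of_hasCompactSupport hvs (by norm_num)
  have hfs : HasCompactSupport (fun w => max (u w) (v w)) := by
    refine HasCompactSupport.intro (hus.isCompact.union hvs.isCompact) fun x hx => ?_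
    rw [Set.mem_union, not_or] at hx
    simp [image_eq_zero_of_notMem_tsupport hx.1, image_eq_zero_of_notMem_tsupport hx.2]
  obtain ⟨hg1, hg2⟩ := conv_twice_diff (μ := leb n) (hCu.max hCv) hk hfs hks
  have key := fun (m : ℕ) (Y : Fin m → Fin n → ℂ) (κ : ℝ) =>
    max_conv_lower (μ := leb n) hu hus hv hvs hk hks hk0 hk1
      (Finset.univ : Finset (Fin m × Fin 2))
      (fun p => if p.2 = 0 then cvec (Y p.1) else Complex.I • cvec (Y p.1)) κ z
  simp only [Fintype.sum_prod_type, Fin.sum_univ_two, if_true, one_ne_zero, if_false,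
    ← cHess_qf (hdu _), ← cHess_qf (hdv _)] at key
  set g : EuclideanSpace ℂ (Fin n) → ℝ :=
    fun z => ∫ y, k y * max (u (z - y)) (v (z - y)) ∂(leb n) with hg
  simp only [← cHess_qf (hg2 z), ← Finset.mul_sum] at key
  have hP : (cHess g z).PosDef := by
    refine posDef_of_lower (cHess_herm hg1 (hg2 z)) hδ fun x => ?_
    have := key 1 (fun _ => x) (4 * (δ * ∑ i, ‖x i‖ ^ 2))
      (fun y hy => by simpa using (Hu y hy).1 x) (fun y hy => by simpa using (Hv y hy).1 x)
    simpa using this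
  refine ⟨hP, jP_le_of_dual hP hs.le fun P hP X => ?_⟩
  have := key n (fun i j => (P * X) j i) (4 * (2 * (P * X).trace.re - s))
    (fun y hy => by have := (Hu y hy).2 P hP X; linarith)
    (fun y hy => by have := (Hv y hy).2 P hP X; linarith)
  linarith

end FinalPart

/-- Let `u, v` be smooth plurisubharmonic functions on `U ⊆ ℂ^n` whose complex Hessians
satisfy `P_{ω_E}(√-1∂∂̄u) < c` and `P_{ω_E}(√-1∂∂̄v) < c`.  Then the current
`T = √-1∂∂̄ max(u,v)` satisfies `n c T^{n-1} > (n-1) T^{n-2} ∧ ω_E` in the regularized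
sense: for every compact `K ⊆ U` there are `ε > 0` and `r₀ > 0` such that for all
`0 < r < r₀` the smooth regularization `T^{(r)} = √-1∂∂̄ (max(u,v))^{(r)}` is positive
definite on `K` with `P_{ω_E}(T^{(r)}) < c - ε`, i.e.
`n (c-ε) (T^{(r)})^{n-1} > (n-1) (T^{(r)})^{n-2} ∧ ω_E` on `K`. -/
theorem max_psh_subsolution {n : ℕ} (hn : 1 ≤ n)
    {U : Set (EuclideanSpace ℂ (Fin n))} (hU : IsOpen U)
    (u v : EuclideanSpace ℂ (Fin n) → ℝ)
    (hu : ContDiffOn ℝ (⊤ : ℕ∞) u U) (hv : ContDiffOn ℝ (⊤ : ℕ∞) v U)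
    (hupsh : PSHOn u U) (hvpsh : PSHOn v U)
    (c : ℝ) (hc : 0 < c)
    (huc : ∀ z ∈ U, (cHess u z).PosDef ∧ jP (cHess u z) 1 < c)
    (hvc : ∀ z ∈ U, (cHess v z).PosDef ∧ jP (cHess v z) 1 < c)
    (ρ : ℝ → ℝ) (hρsm : ContDiff ℝ (⊤ : ℕ∞) ρ) (hρ0 : ∀ t, 0 ≤ ρ t)
    (hρsupp : ∀ t, 1 < t → ρ t = 0)
    (hρnorm : ∫ y in ball (0 : EuclideanSpace ℂ (Fin n)) 1, ρ ‖y‖ ∂(leb n) = 1)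
    (K : Set (EuclideanSpace ℂ (Fin n))) (hK : IsCompact K) (hKU : K ⊆ U) :
    ∃ ε > 0, ∃ r₀ > 0, ∀ r : ℝ, 0 < r → r < r₀ → ∀ z ∈ K,
      (cHess (reg (fun w => max (u w) (v w)) ρ r) z).PosDef ∧
        jP (cHess (reg (fun w => max (u w) (v w)) ρ r) z) 1 < c - ε := by
  obtain ⟨R', hR', hsub⟩ := hK.exists_cthickening_subset_open hU hKU
  set L := cthickening R' K with hLdef
  have hL : IsCompact L := hK.cthickening
  obtain ⟨χ, hχ1, hχ⟩ := exists_global hU hL hsub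
  obtain ⟨hu2, hus⟩ := hχ u hu
  obtain ⟨hv2, hvs⟩ := hχ v hv
  have eu : ∀ z ∈ L, cHess (fun z => χ z * u z) z = cHess u z := fun z hz =>
    cHess_congr (by filter_upwards [hχ1 z hz] with w hw; rw [hw, one_mul])
  have ev : ∀ z ∈ L, cHess (fun z => χ z * v z) z = cHess v z := fun z hz =>
    cHess_congr (by filter_upwards [hχ1 z hz] with w hw; rw [hw, one_mul])
  obtain ⟨δ, hδ, s, hs, hsc, H⟩ := uniform_on_compact hu2 hL hc
    (fun z hz => by rw [eu z hz]; exact huc z (hsub hz))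
  obtain ⟨δ', hδ', s', hs', hsc', H'⟩ := uniform_on_compact hv2 hL hc
    (fun z hz => by rw [ev z hz]; exact hvc z (hsub hz))
  have hm : max s s' < c := max_lt hsc hsc'
  refine ⟨(c - max s s') / 2, by linarith, R' / 2, by linarith, fun r hr hrR z hz => ?_⟩
  obtain ⟨D, hD⟩ := kernel_lip (n := n) hρsm hρsupp hr
  have hx0 : ∀ x : Fin n → ℂ, 0 ≤ ∑ i, ‖x i‖ ^ 2 := fun x =>
    Finset.sum_nonneg fun i _ => by positivity
  have hball : ∀ w ∈ Metric.ball z (R' / 2), ∀ y : EuclideanSpace ℂ (Fin n), ‖y‖ < r →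
      w - y ∈ L := by
    intro w hw y hy
    refine mem_cthickening_of_dist_le _ z _ _ hz ?_
    rw [mem_ball, dist_eq_norm] at hw
    rw [dist_eq_norm]
    have : w - y - z = (w - z) - y := by abel
    rw [this]
    have := norm_sub_le (w - z) y
    linarith
  have hky : ∀ y : EuclideanSpace ℂ (Fin n), (r ^ (2 * n))⁻¹ * ρ (‖y‖ / r) ≠ 0 → ‖y‖ < r := by
    intro y hy
    by_contra h
    exact hy (kernel_zero hρsm hρsupp hr y (not_lt.1 h))
  have hreg : reg (fun w => max (u w) (v w)) ρ r =ᶠ[nhds z]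
      fun z => ∫ y, ((r ^ (2 * n))⁻¹ * ρ (‖y‖ / r)) *
        max (χ (z - y) * u (z - y)) (χ (z - y) * v (z - y)) ∂(leb n) := by
    filter_upwards [Metric.ball_mem_nhds z (half_pos hR')] with w hw
    unfold reg
    rw [setIntegral_eq_integral_of_forall_compl_eq_zero]
    · refine integral_congr_ae (Filter.Eventually.of_forall fun y => ?_)
      by_cases hy : (r ^ (2 * n))⁻¹ * ρ (‖y‖ / r) = 0
      · simp only [hy, zero_mul]
      · have h1 : χ (w - y) = 1 := (hχ1 _ (hball w hw y (hky y hy))).self_of_nhds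
        simp only [h1, one_mul]
    · intro y hy
      rw [mem_ball_zero_iff, not_lt] at hy
      rw [kernel_zero hρsm hρsupp hr y hy, zero_mul]
  rw [cHess_congr hreg]
  have hz' : z ∈ Metric.ball z (R' / 2) := Metric.mem_ball_self (half_pos hR')
  have fin := final_point hu2 hus hv2 hvs hD (kernel_supp hρsm hρsupp hr)
    (fun y => mul_nonneg (by positivity) (hρ0 _)) (kernel_int hρsm hρsupp hρnorm hr)
    (lt_min hδ hδ') (lt_max_of_lt_left hs : 0 < max s s') z
    (fun y hy => by
      have h := H _ (hball z hz' y (hky y hy))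
      exact ⟨fun x => (mul_le_mul_of_nonneg_right (min_le_left _ _) (hx0 x)).trans (h.1 x),
        fun P hP X => (h.2 P hP X).trans (le_max_left _ _)⟩)
    (fun y hy => by
      have h := H' _ (hball z hz' y (hky y hy))
      exact ⟨fun x => (mul_le_mul_of_nonneg_right (min_le_right _ _) (hx0 x)).trans (h.1 x),
        fun P hP X => (h.2 P hP X).trans (le_max_right _ _)⟩)
  exact ⟨fin.1, lt_of_le_of_lt fin.2 (by linarith)⟩
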